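/- For the imperfect-polarization Jones matrix Q = [[1, a],[b, c]] with a, b, c ∈ ℂ, the Mueller matrix ξ(Q) = A (Q ⊗ Q*) A⁻¹ equals the explicit matrix whose rows are: row 0 = ((1+|a|²+|b|²+|c|²)/2, (1+|b|²−|a|²−|c|²)/2, Re(a+bc̄), −Im(a−bc̄)); row 1 = ((1+|a|²−|b|²−|c|²)/2, (1+|c|²−|a|²−|b|²)/2, Re(a−bc̄), −Im(a+bc̄)); row 2 = (Re(b+ac̄), Re(b−ac̄), Re(c+ab̄), −Im(c+ab̄)); row 3 = (Im(b−ac̄), Im(b+ac̄), Im(c−ab̄), Re(c−ab̄)). -/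

import Mathlib

open Matrix Complex
open scoped Kronecker Matrix

/-- The matrix `A` relating the Kronecker-product picture to the Mueller picture. -/
noncomputable def muellerA : Matrix (Fin 4) (Fin 4) ℂ :=
  !![1, 0, 0, 1;
     1, 0, 0, -1;
     0, 1, 1, 0;
     0, Complex.I, -Complex.I, 0]

/-- The Mueller matrix `ξ(J) = A (J ⊗ J*) A⁻¹` of a Jones matrix `J`. -/
noncomputable def mueller (J : Matrix (Fin 2) (Fin 2) ℂ) : Matrix (Fin 4) (Fin 4) ℂ :=
  muellerA * (Matrix.reindex finProdFinEquiv finProdFinEquiv (J ⊗ₖ J.map star)) * muellerA⁻¹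


/-- The inverse of `A` is half its conjugate transpose. -/
lemma muellerA_inv : muellerA⁻¹ =
    !![1/2, 1/2, 0, 0; 0, 0, 1/2, -Complex.I/2; 0, 0, 1/2, Complex.I/2; 1/2, -1/2, 0, 0] := by
  apply Matrix.inv_eq_right_inv
  ext i j
  fin_cases i <;> fin_cases j <;>
    simp [muellerA, Matrix.mul_apply, Fin.sum_univ_four, Complex.ext_iff] <;> norm_num

/-- The Kronecker product written as an explicit `4 × 4` matrix. -/
lemma kron_explicit (a b c : ℂ) :
    Matrix.reindex finProdFinEquiv finProdFinEquiv
      ((!![1, a; b, c] : Matrix (Fin 2) (Fin 2) ℂ) ⊗ₖ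
        (!![1, a; b, c] : Matrix (Fin 2) (Fin 2) ℂ).map star) =
    (!![1, star a, a, a * star a;
       star b, star c, a * star b, a * star c;
       b, b * star a, c, c * star a;
       b * star b, b * star c, c * star b, c * star c] : Matrix (Fin 4) (Fin 4) ℂ) := by
  ext i j
  fin_cases i <;> fin_cases j <;>
    simp [finProdFinEquiv, Fin.divNat, Fin.modNat, Matrix.kroneckerMap_apply]

/-- explicit form of the Mueller matrix `ξ(Q)` of the
imperfect-polarization Jones matrix `Q = [[1, a],[b, c]]`. -/
theorem mueller_imperfect_polarization (a b c : ℂ) :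
    mueller !![1, a; b, c] =
      !![(((1 + ‖a‖ ^ 2 + ‖b‖ ^ 2 + ‖c‖ ^ 2) / 2 : ℝ) : ℂ),
           (((1 + ‖b‖ ^ 2 - ‖a‖ ^ 2 - ‖c‖ ^ 2) / 2 : ℝ) : ℂ),
           (((a + b * star c).re : ℝ) : ℂ),
           ((-(a - b * star c).im : ℝ) : ℂ);
         (((1 + ‖a‖ ^ 2 - ‖b‖ ^ 2 - ‖c‖ ^ 2) / 2 : ℝ) : ℂ),
           (((1 + ‖c‖ ^ 2 - ‖a‖ ^ 2 - ‖b‖ ^ 2) / 2 : ℝ) : ℂ),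
           (((a - b * star c).re : ℝ) : ℂ),
           ((-(a + b * star c).im : ℝ) : ℂ);
         (((b + a * star c).re : ℝ) : ℂ),
           (((b - a * star c).re : ℝ) : ℂ),
           (((c + a * star b).re : ℝ) : ℂ),
           ((-(c + a * star b).im : ℝ) : ℂ);
         (((b - a * star c).im : ℝ) : ℂ),
           (((b + a * star c).im : ℝ) : ℂ),
           (((c - a * star b).im : ℝ) : ℂ),
           (((c - a * star b).re : ℝ) : ℂ)] := by
  rw [mueller, kron_explicit, muellerA_inv]
  ext i j
  fin_cases i <;> fin_cases j <;>
    simp [muellerA, Matrix.mul_apply, Fin.sum_univ_four, Complex.ext_iff, Complex.sq_norm,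
      Complex.normSq_apply] <;>
    first
    | (constructor <;> ring)
    | ring
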